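/- A Busemann surface (S,d) is join-hull commutative: for any nonempty convex set A ⊆ S and any point p ∈ S with p ∉ A, conv({p} ∪ A) = ⋃ { [p,x] : x ∈ A }. -/

import Mathlib

open Metric Set MeasureTheory

/-- `γ` is a geodesic on the interval `[a, b]`. -/
def IsGeodesicOn {S : Type*} [MetricSpace S] (γ : ℝ → S) (a b : ℝ) : Prop :=
  ∀ s ∈ Set.Icc a b, ∀ t ∈ Set.Icc a b, dist (γ s) (γ t) = |s - t|

/-- `γ` is a geodesic from `x` to `y`. -/
def IsGeodesicFromTo {S : Type*} [MetricSpace S] (γ : ℝ → S) (x y : S) : Prop :=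
  IsGeodesicOn γ 0 (dist x y) ∧ γ 0 = x ∧ γ (dist x y) = y

/-- A geodesic metric space: every pair of points is joined by a geodesic. -/
def IsGeodesicMetricSpace (S : Type*) [MetricSpace S] : Prop :=
  ∀ x y : S, ∃ γ : ℝ → S, IsGeodesicFromTo γ x y

/-- A Busemann space: a geodesic metric space in which the distance function between
any two geodesics is convex. -/
def IsBusemannSpace (S : Type*) [MetricSpace S] : Prop :=
  IsGeodesicMetricSpace S ∧
    ∀ (γ γ' : ℝ → S) (a b a' b' : ℝ), a ≤ b → a' ≤ b' →
      IsGeodesicOn γ a b → IsGeodesicOn γ' a' b' →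
      ConvexOn ℝ (Set.Icc (0 : ℝ) 1)
        (fun t => dist (γ ((1 - t) * a + t * b)) (γ' ((1 - t) * a' + t * b')))

/-- A Busemann surface: a Busemann space homeomorphic to the plane `ℝ²`. -/
def IsBusemannSurface (S : Type*) [MetricSpace S] : Prop :=
  IsBusemannSpace S ∧ Nonempty (S ≃ₜ (ℝ × ℝ))

/-- `G` is the image of a geodesic from `x` to `y`. -/
def IsGeodesicSegment {S : Type*} [MetricSpace S] (x y : S) (G : Set S) : Prop :=
  ∃ γ : ℝ → S, IsGeodesicFromTo γ x y ∧ G = γ '' Set.Icc 0 (dist x y)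

/-- Convexity of a set with respect to a geodesic-segment assignment `seg`. -/
def SegConvex {S : Type*} (seg : S → S → Set S) (R : Set S) : Prop :=
  ∀ p ∈ R, ∀ q ∈ R, seg p q ⊆ R

/-- The convex hull: the smallest `seg`-convex set containing `Q`. -/
def segConvexHull {S : Type*} (seg : S → S → Set S) (Q : Set S) : Set S :=
  ⋂₀ {R : Set S | SegConvex seg R ∧ Q ⊆ R}

/-- A line of `S`: the image of an isometric embedding of `ℝ` into `S`. -/
def IsLineSet {S : Type*} [MetricSpace S] (L : Set S) : Prop :=
  ∃ ℓ : ℝ → S, Isometry ℓ ∧ L = Set.range ℓ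

/-- An open halfplane determined by a line `L`: a connected component of `S \ L`. -/
def IsOpenHalfplane {S : Type*} [MetricSpace S] (L H : Set S) : Prop :=
  ∃ x, x ∉ L ∧ H = connectedComponentIn Lᶜ x

/-- A closed halfplane determined by a line `L`: an open halfplane together with `L`. -/
def IsClosedHalfplane {S : Type*} [MetricSpace S] (L H : Set S) : Prop :=
  ∃ H', IsOpenHalfplane L H' ∧ H = H' ∪ L

/-- `X` and `Y` are line-separable: they lie in different open halfplanes of some line. -/
def LineSeparable {S : Type*} [MetricSpace S] (X Y : Set S) : Prop :=
  ∃ L H₁ H₂ : Set S, IsLineSet L ∧ IsOpenHalfplane L H₁ ∧ IsOpenHalfplane L H₂ ∧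
    H₁ ≠ H₂ ∧ X ⊆ H₁ ∧ Y ⊆ H₂

/-- `X` and `Y` are weakly line-separable: they lie in different closed halfplanes of
some line. -/
def WeaklyLineSeparable {S : Type*} [MetricSpace S] (X Y : Set S) : Prop :=
  ∃ L H₁ H₂ : Set S, IsLineSet L ∧ IsClosedHalfplane L H₁ ∧ IsClosedHalfplane L H₂ ∧
    H₁ ≠ H₂ ∧ X ⊆ H₁ ∧ Y ⊆ H₂

/-- `Q` is in general position: no three distinct points of `Q` lie on a common line. -/
def InGeneralPosition {S : Type*} [MetricSpace S] (Q : Set S) : Prop :=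
  ∀ x ∈ Q, ∀ y ∈ Q, ∀ z ∈ Q, x ≠ y → y ≠ z → x ≠ z →
    ∀ L : Set S, IsLineSet L → ¬(x ∈ L ∧ y ∈ L ∧ z ∈ L)

/-- `L` is a tangent line of the set `K`. -/
def IsTangentLine {S : Type*} [MetricSpace S] (L K : Set S) : Prop :=
  IsLineSet L ∧ (K ∩ L).Nonempty ∧ ∃ H, IsClosedHalfplane L H ∧ K ⊆ H

/-- `L` is an inner bitangent of `K'` and `K''`. -/
def IsInnerBitangent {S : Type*} [MetricSpace S] (L K' K'' : Set S) : Prop :=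
  IsTangentLine L K' ∧ IsTangentLine L K'' ∧
    ∃ H₁ H₂, IsClosedHalfplane L H₁ ∧ IsClosedHalfplane L H₂ ∧ H₁ ≠ H₂ ∧
      K' ⊆ H₁ ∧ K'' ⊆ H₂

/-!
Write `[x, y]` for the set of points metrically between `x` and `y`. A continuous injection `E` of
the space into `ℂ` assigns to a segment `[y, z]` and a point `x` off it a complex angle: the
variation of `log (E · - E x)` along `[y, z]`. The sum of the three angles of a triangle
exponentiates to `-1`, so it is a nonzero *orientation* of the triangle; it is alternating in the
vertices, and it is constant while one vertex moves along a segment without the triangle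
degenerating. Comparing orientations yields first that `{m | x ∈ [a, m]}` is convex, then the inner
Pasch axiom. Finally let `u ∈ [p, a]`, `v ∈ [p, b]` and `w ∈ [u, v]`. By Pasch every `[p, x]` with
`x ∈ [a, b]` meets `[u, v]`, on one side of `w` or the other, and connectedness of `[a, b]` provides
an `x` for which `[p, x]` passes through `w`.
-/

/-! ### Variation of the logarithm -/

section LogVariation

theorem exists_continuous_exp_eq {X : Type*} [TopologicalSpace X] [SimplyConnectedSpace X]
    [LocallyPathConnectedSpace X] {f : X → ℂ} (hf : Continuous f) (hf0 : ∀ x, f x ≠ 0) :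
    ∃ L : X → ℂ, Continuous L ∧ ∀ x, Complex.exp (L x) = f x := by
  obtain ⟨x₀⟩ : Nonempty X := inferInstance
  obtain ⟨L, ⟨-, hL⟩, -⟩ := Complex.isCoveringMapOn_exp.existsUnique_continuousMap_lifts
    (⟨f, hf⟩ : C(X, ℂ)) (Complex.exp_log (hf0 x₀)) hf0
  exact ⟨L, L.continuous, congrFun hL⟩

/-- The variation from `0` to `1` of a continuous logarithm of `f`, a complex number whose imaginary
part is the variation of the argument of `f`. It is `0` by convention if `f` has no continuous
logarithm. -/
noncomputable def logVariation (f : ℝ → ℂ) : ℂ :=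
  open Classical in
  if h : ∃ L : ℝ → ℂ, Continuous L ∧ ∀ t, Complex.exp (L t) = f t then
    h.choose 1 - h.choose 0 else 0

variable {f L : ℝ → ℂ}

theorem logVariation_of_eq_zero {t : ℝ} (ht : f t = 0) : logVariation f = 0 :=
  dif_neg fun ⟨_, _, hL⟩ => Complex.exp_ne_zero _ ((hL t).trans ht)

theorem sub_eq_sub_of_exp_eq_exp {M : ℝ → ℂ} (hL : Continuous L) (hM : Continuous M)
    (h : ∀ t, Complex.exp (L t) = Complex.exp (M t)) (s t : ℝ) : L t - L s = M t - M s := by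
  have hLM : (fun r => L r + (M s - L s)) = M := by
    refine Complex.isCoveringMap_exp.eq_of_comp_eq (hL.add continuous_const) hM ?_ s (by simp)
    funext r
    apply Subtype.ext
    simp [Complex.exp_add, Complex.exp_sub, h]
  linear_combination congrFun hLM t

theorem logVariation_eq_sub (hL : Continuous L) (hLf : ∀ t, Complex.exp (L t) = f t) :
    logVariation f = L 1 - L 0 := by
  have hex : ∃ L : ℝ → ℂ, Continuous L ∧ ∀ t, Complex.exp (L t) = f t := ⟨L, hL, hLf⟩
  obtain ⟨hM, hMf⟩ := hex.choose_spec
  rw [logVariation, dif_pos hex]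
  exact sub_eq_sub_of_exp_eq_exp hM hL (fun t => by rw [hMf, hLf]) 0 1

theorem logVariation_const (c : ℂ) : logVariation (fun _ => c) = 0 := by
  rcases eq_or_ne c 0 with rfl | hc
  · exact logVariation_of_eq_zero (t := 0) rfl
  · rw [logVariation_eq_sub continuous_const fun _ => Complex.exp_log hc, sub_self]

theorem logVariation_neg (hf : Continuous f) (hf0 : ∀ t, f t ≠ 0) :
    logVariation (fun t => -f t) = logVariation f := by
  obtain ⟨L, hL, hLf⟩ := exists_continuous_exp_eq hf hf0
  rw [logVariation_eq_sub hL hLf,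
    logVariation_eq_sub (L := fun t => L t + Real.pi * Complex.I) (by fun_prop)
      fun t => by rw [Complex.exp_add, hLf, Complex.exp_pi_mul_I, mul_neg_one]]
  ring

theorem exp_logVariation (hf : Continuous f) (hf0 : ∀ t, f t ≠ 0) :
    Complex.exp (logVariation f) = f 1 / f 0 := by
  obtain ⟨L, hL, hLf⟩ := exists_continuous_exp_eq hf hf0
  rw [logVariation_eq_sub hL hLf, Complex.exp_sub, hLf, hLf]

theorem logVariation_unitSquare {F : ℝ → ℝ → ℂ} (hF : Continuous fun z : ℝ × ℝ => F z.1 z.2)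
    (hF0 : ∀ s t, F s t ≠ 0) :
    logVariation (F · 0) + logVariation (F 1 ·) = logVariation (F 0 ·) + logVariation (F · 1) := by
  obtain ⟨L, hL, hLF⟩ := exists_continuous_exp_eq hF fun z => hF0 z.1 z.2
  have horizontal (t : ℝ) : logVariation (F · t) = L (1, t) - L (0, t) :=
    logVariation_eq_sub (L := fun s => L (s, t)) (by fun_prop) fun s => hLF (s, t)
  have vertical (s : ℝ) : logVariation (F s ·) = L (s, 1) - L (s, 0) :=
    logVariation_eq_sub (L := fun t => L (s, t)) (by fun_prop) fun t => hLF (s, t)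
  rw [horizontal, horizontal, vertical, vertical]
  ring

end LogVariation

/-! ### Metric betweenness -/

/-- The point `w` lies metrically between `x` and `y`: equality holds in the triangle inequality.
In a Busemann space this says `w ∈ [x, y]`. The order of the arguments is that of `Wbtw`. -/
def MetricBtw {X : Type*} [PseudoMetricSpace X] (x w y : X) : Prop :=
  dist x w + dist w y = dist x y

/-- One of the three points lies metrically between the other two. -/
def MetricCollinear {X : Type*} [PseudoMetricSpace X] (x y z : X) : Prop :=
  MetricBtw x y z ∨ MetricBtw y z x ∨ MetricBtw z x y

section MetricBtw

variable {X : Type*} [PseudoMetricSpace X] {w x y z : X}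

theorem metricBtw_self_left (x y : X) : MetricBtw x x y := by simp [MetricBtw]

theorem metricBtw_self_right (x y : X) : MetricBtw x y y := by simp [MetricBtw]

theorem MetricBtw.symm (h : MetricBtw x w y) : MetricBtw y w x := by
  rw [MetricBtw, dist_comm y w, dist_comm w x, dist_comm y x, add_comm, h]

theorem MetricBtw.trans_left (h₁ : MetricBtw w y z) (h₂ : MetricBtw w x y) : MetricBtw w x z := by
  unfold MetricBtw at *
  linarith [dist_triangle x y z, dist_triangle w x z]

theorem MetricBtw.trans_left_right (h₁ : MetricBtw w y z) (h₂ : MetricBtw w x y) :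
    MetricBtw x y z := by
  unfold MetricBtw at *
  linarith [dist_triangle x y z, dist_triangle w x z]

theorem MetricBtw.trans_right (h₁ : MetricBtw w x z) (h₂ : MetricBtw x y z) : MetricBtw w y z :=
  (h₁.symm.trans_left h₂.symm).symm

theorem MetricBtw.trans_right_left (h₁ : MetricBtw w x z) (h₂ : MetricBtw x y z) :
    MetricBtw w x y :=
  (h₁.symm.trans_left_right h₂.symm).symm

theorem MetricBtw.dist_left_mem_Icc (h : MetricBtw x w y) : dist x w ∈ Icc 0 (dist x y) :=
  ⟨dist_nonneg, h ▸ le_add_of_nonneg_right dist_nonneg⟩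

theorem mul_dist_mem_Icc (t : Icc (0 : ℝ) 1) : t * dist x y ∈ Icc 0 (dist x y) :=
  ⟨mul_nonneg t.2.1 dist_nonneg, mul_le_of_le_one_left dist_nonneg t.2.2⟩

theorem exists_mul_dist_eq {r : ℝ} (hr : r ∈ Icc 0 (dist x y)) :
    ∃ t ∈ Icc (0 : ℝ) 1, t * dist x y = r :=
  ⟨r / dist x y, ⟨div_nonneg hr.1 dist_nonneg, div_le_one_of_le₀ hr.2 dist_nonneg⟩,
    div_mul_cancel_of_imp fun h => le_antisymm (h ▸ hr.2) hr.1⟩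

theorem isClosed_setOf_exists_mem_metricBtw {K : Set X} (hK : IsCompact K) (p : X) :
    IsClosed {x | ∃ y ∈ K, MetricBtw p y x} := by
  have : CompactSpace K := isCompact_iff_compactSpace.1 hK
  have hclosed : IsClosed {z : X × K | MetricBtw p z.2 z.1} :=
    isClosed_eq (by fun_prop) (by fun_prop)
  convert isClosedMap_fst_of_compactSpace _ hclosed using 1
  ext x
  simp

end MetricBtw

/-! ### Geodesics -/

section Geodesic

variable {S : Type*} [MetricSpace S] {γ γ₁ γ₂ : ℝ → S} {x w y : S}

theorem isGeodesicOn_of_dist_le {a b : ℝ} (hab : dist (γ a) (γ b) = b - a)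
    (hle : ∀ s ∈ Icc a b, ∀ t ∈ Icc a b, s ≤ t → dist (γ s) (γ t) ≤ t - s) :
    IsGeodesicOn γ a b := by
  have heq : ∀ s ∈ Icc a b, ∀ t ∈ Icc a b, s ≤ t → dist (γ s) (γ t) = t - s := by
    intro s hs t ht hst
    have hle_ab : a ≤ b := hs.1.trans hs.2
    linarith [hle s hs t ht hst, hle a (left_mem_Icc.2 hle_ab) s hs hs.1,
      hle t ht b (right_mem_Icc.2 hle_ab) ht.2, dist_triangle4 (γ a) (γ s) (γ t) (γ b)]
  intro s hs t ht
  rcases le_total s t with hst | hts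
  · rw [heq s hs t ht hst, abs_sub_comm, abs_of_nonneg (sub_nonneg.2 hst)]
  · rw [dist_comm, heq t ht s hs hts, abs_of_nonneg (sub_nonneg.2 hts)]

theorem IsGeodesicFromTo.dist_left (h : IsGeodesicFromTo γ x y) {t : ℝ}
    (ht : t ∈ Icc 0 (dist x y)) : dist x (γ t) = t := by
  have := h.1 0 (left_mem_Icc.2 dist_nonneg) t ht
  rwa [h.2.1, zero_sub, abs_neg, abs_of_nonneg ht.1] at this

theorem IsGeodesicFromTo.dist_right (h : IsGeodesicFromTo γ x y) {t : ℝ}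
    (ht : t ∈ Icc 0 (dist x y)) : dist (γ t) y = dist x y - t := by
  have := h.1 t ht _ (right_mem_Icc.2 dist_nonneg)
  rwa [h.2.2, abs_sub_comm, abs_of_nonneg (sub_nonneg.2 ht.2)] at this

theorem IsGeodesicFromTo.metricBtw (h : IsGeodesicFromTo γ x y) {t : ℝ}
    (ht : t ∈ Icc 0 (dist x y)) : MetricBtw x (γ t) y := by
  rw [MetricBtw, h.dist_left ht, h.dist_right ht, add_sub_cancel]

theorem IsGeodesicFromTo.concat (h₁ : IsGeodesicFromTo γ₁ x w) (h₂ : IsGeodesicFromTo γ₂ w y)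
    (hw : MetricBtw x w y) :
    IsGeodesicFromTo (fun r => if r ≤ dist x w then γ₁ r else γ₂ (r - dist x w)) x y := by
  set γ : ℝ → S := fun r => if r ≤ dist x w then γ₁ r else γ₂ (r - dist x w)
  have hwy : dist w y = dist x y - dist x w := eq_sub_of_add_eq' hw
  have first {r : ℝ} (hr : r ≤ dist x w) : γ r = γ₁ r := if_pos hr
  have second {r : ℝ} (hr : dist x w ≤ r) : γ r = γ₂ (r - dist x w) := by
    rcases hr.eq_or_lt with rfl | hr
    · rw [first le_rfl, sub_self, h₁.2.2, h₂.2.1]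
    · exact if_neg hr.not_ge
  have h0 : γ 0 = x := (first dist_nonneg).trans h₁.2.1
  have h1 : γ (dist x y) = y := by
    rw [second hw.dist_left_mem_Icc.2, ← hwy, h₂.2.2]
  refine ⟨isGeodesicOn_of_dist_le (by rw [h0, h1, sub_zero]) fun s hs t ht hst => ?_, h0, h1⟩
  have mem_first {r : ℝ} (hr0 : 0 ≤ r) (hr : r ≤ dist x w) : r ∈ Icc 0 (dist x w) := ⟨hr0, hr⟩
  have mem_second {r : ℝ} (hr : dist x w ≤ r) (hr1 : r ≤ dist x y) :
      r - dist x w ∈ Icc 0 (dist w y) := ⟨sub_nonneg.2 hr, by linarith⟩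
  rcases le_total t (dist x w) with htw | hwt
  · rw [first htw, first (hst.trans htw), h₁.1 s (mem_first hs.1 (hst.trans htw)) t
      (mem_first ht.1 htw), abs_sub_comm, abs_of_nonneg (sub_nonneg.2 hst)]
  · rcases le_total s (dist x w) with hsw | hws
    · rw [first hsw, second hwt]
      linarith [dist_triangle (γ₁ s) w (γ₂ (t - dist x w)), h₁.dist_right (mem_first hs.1 hsw),
        h₂.dist_left (mem_second hwt ht.2)]
    · rw [second hws, second hwt, h₂.1 _ (mem_second hws hs.2) _ (mem_second hwt ht.2),
        sub_sub_sub_cancel_right, abs_sub_comm, abs_of_nonneg (sub_nonneg.2 hst)]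

end Geodesic

namespace IsGeodesicMetricSpace

variable {S : Type*} [MetricSpace S] (hS : IsGeodesicMetricSpace S) {x w y : S}

include hS in
theorem exists_isGeodesicFromTo_of_metricBtw (hw : MetricBtw x w y) :
    ∃ γ, IsGeodesicFromTo γ x y ∧ γ (dist x w) = w := by
  obtain ⟨γ₁, h₁⟩ := hS x w
  obtain ⟨γ₂, h₂⟩ := hS w y
  exact ⟨_, h₁.concat h₂ hw, (if_pos le_rfl).trans h₁.2.2⟩

/-- A chosen geodesic from `x` to `y`, parametrized proportionally to arc length on `[0, 1]` and
constant outside `[0, 1]`, so that it is continuous on `ℝ`. -/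
noncomputable def lineMap (x y : S) (t : ℝ) : S :=
  (hS x y).choose (projIcc 0 1 zero_le_one t * dist x y)

theorem lineMap_of_mem {t : ℝ} (ht : t ∈ Icc (0 : ℝ) 1) :
    hS.lineMap x y t = (hS x y).choose (t * dist x y) := by
  rw [lineMap, projIcc_of_mem _ ht]

@[simp]
theorem lineMap_zero (x y : S) : hS.lineMap x y 0 = x := by
  rw [lineMap_of_mem hS (by simp), zero_mul, (hS x y).choose_spec.2.1]

@[simp]
theorem lineMap_one (x y : S) : hS.lineMap x y 1 = y := by
  rw [lineMap_of_mem hS (by simp), one_mul, (hS x y).choose_spec.2.2]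

theorem dist_lineMap_lineMap (x y : S) (s t : ℝ) :
    dist (hS.lineMap x y s) (hS.lineMap x y t) =
      |(projIcc 0 1 zero_le_one s : ℝ) - projIcc 0 1 zero_le_one t| * dist x y := by
  rw [lineMap, lineMap, (hS x y).choose_spec.1 _ (mul_dist_mem_Icc _) _ (mul_dist_mem_Icc _),
    ← sub_mul, abs_mul, abs_of_nonneg (a := dist x y) dist_nonneg]

theorem dist_left_lineMap {t : ℝ} (ht : t ∈ Icc (0 : ℝ) 1) :
    dist x (hS.lineMap x y t) = t * dist x y := by
  rw [lineMap_of_mem hS ht, (hS x y).choose_spec.dist_left (mul_dist_mem_Icc ⟨t, ht⟩)]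

theorem metricBtw_lineMap (x y : S) (t : ℝ) : MetricBtw x (hS.lineMap x y t) y :=
  (hS x y).choose_spec.metricBtw (mul_dist_mem_Icc _)

@[simp]
theorem lineMap_self (x : S) (t : ℝ) : hS.lineMap x x t = x := by
  simpa using hS.dist_lineMap_lineMap x x t 0

end IsGeodesicMetricSpace

namespace IsBusemannSpace

variable {S : Type*} [MetricSpace S] (hB : IsBusemannSpace S)

section Geodesic

variable {γ γ' : ℝ → S} {a v w x y z x' y' : S}

include hB in
theorem dist_le_of_isGeodesicFromTo (h : IsGeodesicFromTo γ x y) (h' : IsGeodesicFromTo γ' x' y')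
    {t : ℝ} (ht : t ∈ Icc (0 : ℝ) 1) :
    dist (γ (t * dist x y)) (γ' (t * dist x' y')) ≤ (1 - t) * dist x x' + t * dist y y' := by
  have hconv := hB.2 γ γ' 0 (dist x y) 0 (dist x' y') dist_nonneg dist_nonneg h.1 h'.1
  simpa [h.2.1, h.2.2, h'.2.1, h'.2.2] using hconv.2 (left_mem_Icc.2 zero_le_one)
    (right_mem_Icc.2 zero_le_one) (sub_nonneg.2 ht.2) ht.1 (sub_add_cancel 1 t)

include hB in
theorem eqOn_of_isGeodesicFromTo (h : IsGeodesicFromTo γ x y) (h' : IsGeodesicFromTo γ' x y) :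
    EqOn γ γ' (Icc 0 (dist x y)) := by
  intro r hr
  obtain ⟨t, ht, rfl⟩ := exists_mul_dist_eq hr
  simpa using hB.dist_le_of_isGeodesicFromTo h h' ht

include hB in
theorem mem_iff_metricBtw_of_isGeodesicSegment {G : Set S} (hG : IsGeodesicSegment x y G) :
    w ∈ G ↔ MetricBtw x w y := by
  obtain ⟨γ, hγ, rfl⟩ := hG
  constructor
  · rintro ⟨t, ht, rfl⟩
    exact hγ.metricBtw ht
  · intro hw
    obtain ⟨γ', hγ', hγ'w⟩ := hB.1.exists_isGeodesicFromTo_of_metricBtw hw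
    exact ⟨dist x w, hw.dist_left_mem_Icc,
      (hB.eqOn_of_isGeodesicFromTo hγ hγ' hw.dist_left_mem_Icc).trans hγ'w⟩

theorem exists_lineMap_eq (hw : MetricBtw x w y) :
    ∃ t ∈ Icc (0 : ℝ) 1, hB.1.lineMap x y t = w := by
  obtain ⟨γ, hγ, hγw⟩ := hB.1.exists_isGeodesicFromTo_of_metricBtw hw
  obtain ⟨t, ht, htw⟩ := exists_mul_dist_eq hw.dist_left_mem_Icc
  refine ⟨t, ht, ?_⟩
  rw [hB.1.lineMap_of_mem ht, htw]
  exact (hB.eqOn_of_isGeodesicFromTo (hB.1 x y).choose_spec hγ hw.dist_left_mem_Icc).trans hγw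

theorem setOf_metricBtw_eq_image (x y : S) :
    {w | MetricBtw x w y} = hB.1.lineMap x y '' Icc (0 : ℝ) 1 :=
  Subset.antisymm (fun _ hw => hB.exists_lineMap_eq hw)
    (image_subset_iff.2 fun t _ => hB.1.metricBtw_lineMap x y t)

include hB in
theorem metricBtw_total (hv : MetricBtw x v y) (hw : MetricBtw x w y) :
    MetricBtw x v w ∨ MetricBtw x w v := by
  obtain ⟨s, hs, rfl⟩ := hB.exists_lineMap_eq hv
  obtain ⟨t, ht, rfl⟩ := hB.exists_lineMap_eq hw
  simp only [MetricBtw, hB.1.dist_left_lineMap hs, hB.1.dist_left_lineMap ht,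
    hB.1.dist_lineMap_lineMap, projIcc_of_mem _ hs, projIcc_of_mem _ ht]
  rcases le_total s t with hst | hts
  · left
    rw [abs_sub_comm, abs_of_nonneg (sub_nonneg.2 hst)]
    ring
  · right
    rw [abs_sub_comm, abs_of_nonneg (sub_nonneg.2 hts)]
    ring

theorem dist_lineMap_le (x y x' y' : S) {t : ℝ} (ht : t ∈ Icc (0 : ℝ) 1) :
    dist (hB.1.lineMap x y t) (hB.1.lineMap x' y' t) ≤ (1 - t) * dist x x' + t * dist y y' := by
  rw [hB.1.lineMap_of_mem ht, hB.1.lineMap_of_mem ht]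
  exact hB.dist_le_of_isGeodesicFromTo (hB.1 x y).choose_spec (hB.1 x' y').choose_spec ht

include hB in
theorem metricBtw_expand_left (h₁ : MetricBtw a x y) (h₂ : MetricBtw x y z) (hxy : x ≠ y) :
    MetricBtw a x z := by
  -- A local geodesic is a geodesic: along `[x, z]` the distance to `a` is convex and starts with
  -- slope `1`.
  obtain ⟨t, ht, rfl⟩ := hB.exists_lineMap_eq h₂
  have ht0 : 0 < t := ht.1.lt_of_ne' (by rintro rfl; simp at hxy)
  have hconv := hB.dist_lineMap_le a a x z ht
  rw [hB.1.lineMap_self, ← h₁, hB.1.dist_left_lineMap ht] at hconv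
  refine le_antisymm (le_of_mul_le_mul_left ?_ ht0) (dist_triangle a x z)
  linarith

end Geodesic

section Continuity

theorem dist_lineMap_lineMap_le (x y x' y' : S) (s t : ℝ) :
    dist (hB.1.lineMap x y s) (hB.1.lineMap x' y' t) ≤ dist x x' + dist y y' +
      |(projIcc 0 1 zero_le_one s : ℝ) - projIcc 0 1 zero_le_one t| * dist x' y' := by
  have hproj (x y : S) : hB.1.lineMap x y (projIcc 0 1 zero_le_one s) = hB.1.lineMap x y s := by
    rw [IsGeodesicMetricSpace.lineMap, projIcc_val, IsGeodesicMetricSpace.lineMap]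
  obtain ⟨hs0, hs1⟩ := (projIcc (0 : ℝ) 1 zero_le_one s).2
  have hconv := hB.dist_lineMap_le x y x' y' (projIcc (0 : ℝ) 1 zero_le_one s).2
  rw [hproj, hproj] at hconv
  have hx := mul_le_of_le_one_left (dist_nonneg (x := x) (y := x')) (sub_le_self 1 hs0)
  have hy := mul_le_of_le_one_left (dist_nonneg (x := y) (y := y')) hs1
  linarith [dist_triangle (hB.1.lineMap x y s) (hB.1.lineMap x' y' s) (hB.1.lineMap x' y' t),
    hB.1.dist_lineMap_lineMap x' y' s t]

theorem continuous_lineMap_comp {X : Type*} [TopologicalSpace X] {f g : X → S} {τ : X → ℝ}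
    (hf : Continuous f) (hg : Continuous g) (hτ : Continuous τ) :
    Continuous fun z => hB.1.lineMap (f z) (g z) (τ z) := by
  rw [continuous_iff_continuousAt]
  intro z₀
  rw [ContinuousAt, tendsto_iff_dist_tendsto_zero]
  refine squeeze_zero (fun _ => dist_nonneg) (fun z => hB.dist_lineMap_lineMap_le _ _ _ _ _ _) ?_
  have hproj : Continuous fun z => (projIcc (0 : ℝ) 1 zero_le_one (τ z) : ℝ) :=
    continuous_subtype_val.comp (continuous_projIcc.comp hτ)
  have hbound : Continuous fun z => dist (f z) (f z₀) + dist (g z) (g z₀) +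
      |(projIcc 0 1 zero_le_one (τ z) : ℝ) - projIcc 0 1 zero_le_one (τ z₀)| *
        dist (f z₀) (g z₀) :=
    ((hf.dist continuous_const).add (hg.dist continuous_const)).add
      ((hproj.sub continuous_const).abs.mul continuous_const)
  simpa using hbound.tendsto z₀

theorem continuous_lineMap (x y : S) : Continuous (hB.1.lineMap x y) :=
  hB.continuous_lineMap_comp continuous_const continuous_const continuous_id

include hB in
theorem isCompact_setOf_metricBtw (x y : S) : IsCompact {w | MetricBtw x w y} :=
  hB.setOf_metricBtw_eq_image x y ▸ isCompact_Icc.image (hB.continuous_lineMap x y)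

include hB in
theorem isPreconnected_setOf_metricBtw (x y : S) : IsPreconnected {w | MetricBtw x w y} :=
  hB.setOf_metricBtw_eq_image x y ▸
    isPreconnected_Icc.image _ (hB.continuous_lineMap x y).continuousOn

end Continuity

end IsBusemannSpace

/-! ### Angles and orientation -/

namespace IsGeodesicMetricSpace

variable {S : Type*} [MetricSpace S] (hS : IsGeodesicMetricSpace S) (E : S → ℂ)

/-- The complex angle under which the segment `[y, z]` is seen from `x` in the chart `E`: the
variation of `log (E · - E x)` along `[y, z]`. It is `0` by convention if `x` lies on the
segment. -/
noncomputable def angle (x y z : S) : ℂ :=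
  logVariation fun t => E (hS.lineMap y z t) - E x

/-- The total complex angle under which the boundary of the triangle `a b c` is seen from `x`, i.e.
`2πi` times the winding number of the boundary around `x`. -/
noncomputable def winding (x a b c : S) : ℂ :=
  hS.angle E x a b + hS.angle E x b c + hS.angle E x c a

/-- The sum of the complex angles of the triangle `a b c`. For triangles in the plane this is `πi`
or `-πi`, according to the orientation. -/
noncomputable def orientation (a b c : S) : ℂ :=
  hS.angle E a b c + hS.angle E b c a + hS.angle E c a b

theorem angle_self (x y : S) : hS.angle E x y y = 0 := by
  simp only [angle, lineMap_self, logVariation_const]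

theorem winding_rotate (x a b c : S) : hS.winding E x b c a = hS.winding E x a b c := by
  unfold winding
  ring

theorem orientation_rotate (a b c : S) : hS.orientation E b c a = hS.orientation E a b c := by
  unfold orientation
  ring

end IsGeodesicMetricSpace

namespace IsBusemannSpace

variable {S : Type*} [MetricSpace S] (hB : IsBusemannSpace S) {E : S → ℂ}

theorem angle_eq_zero {x y z : S} (h : MetricBtw y x z) : hB.1.angle E x y z = 0 := by
  obtain ⟨t, -, rfl⟩ := hB.exists_lineMap_eq h
  exact logVariation_of_eq_zero (t := t) (sub_self _)

variable (hE : Continuous E) (hinj : Function.Injective E)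

include hE hinj

section Angle

variable {c x y z y' z' : S}

theorem exp_angle (hx : ¬MetricBtw y x z) :
    Complex.exp (hB.1.angle E x y z) = (E z - E x) / (E y - E x) := by
  have hcont : Continuous fun t => E (hB.1.lineMap y z t) - E x :=
    (hE.comp (hB.continuous_lineMap y z)).sub continuous_const
  rw [IsGeodesicMetricSpace.angle, exp_logVariation hcont fun t h0 =>
    hx (hinj (sub_eq_zero.1 h0) ▸ hB.1.metricBtw_lineMap y z t)]
  simp only [IsGeodesicMetricSpace.lineMap_zero, IsGeodesicMetricSpace.lineMap_one]

theorem angle_add_angle (hx : ∀ w, MetricBtw y w z → ¬MetricBtw c x w) :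
    hB.1.angle E x c y + hB.1.angle E x y z = hB.1.angle E x c z := by
  -- The point `x` avoids the cone over `[y, z]` with apex `c`, so the boundary of that cone is
  -- contracted away from `x`.
  have hcont : Continuous fun r : ℝ × ℝ =>
      E (hB.1.lineMap c (hB.1.lineMap y z r.1) r.2) - E x :=
    (hE.comp (hB.continuous_lineMap_comp continuous_const
      ((hB.continuous_lineMap y z).comp continuous_fst) continuous_snd)).sub continuous_const
  have hsquare := logVariation_unitSquare
    (F := fun s t => E (hB.1.lineMap c (hB.1.lineMap y z s) t) - E x) hcont fun s t h0 =>
      hx _ (hB.1.metricBtw_lineMap y z s)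
        (hinj (sub_eq_zero.1 h0) ▸ hB.1.metricBtw_lineMap c _ t)
  simp only [IsGeodesicMetricSpace.lineMap_zero, IsGeodesicMetricSpace.lineMap_one,
    logVariation_const, zero_add] at hsquare
  exact hsquare.symm

theorem angle_swap (x y z : S) : hB.1.angle E x z y = -hB.1.angle E x y z := by
  by_cases hx : MetricBtw y x z
  · rw [hB.angle_eq_zero hx, hB.angle_eq_zero hx.symm, neg_zero]
  · have hcone : ∀ w, MetricBtw y w z → ¬MetricBtw z x w := fun w hw h =>
      hx (hw.symm.trans_left h).symm
    rw [eq_neg_iff_add_eq_zero, hB.angle_add_angle hE hinj hcone, hB.1.angle_self]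

theorem winding_eq_zero (hx : ∀ w, MetricBtw y w z → ¬MetricBtw c x w) :
    hB.1.winding E x c y z = 0 := by
  rw [IsGeodesicMetricSpace.winding, hB.angle_add_angle hE hinj hx, hB.angle_swap hE hinj x c z,
    add_neg_cancel]

theorem logVariation_sub_lineMap (hx : ¬MetricBtw y x z) :
    logVariation (fun t => E x - E (hB.1.lineMap y z t)) = hB.1.angle E x y z := by
  have hcont : Continuous fun t => E (hB.1.lineMap y z t) - E x :=
    (hE.comp (hB.continuous_lineMap y z)).sub continuous_const
  simpa only [neg_sub, IsGeodesicMetricSpace.angle] using logVariation_neg hcont fun t h0 =>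
    hx (hinj (sub_eq_zero.1 h0) ▸ hB.1.metricBtw_lineMap y z t)

theorem angle_add_angle_of_disjoint (hdisj : ∀ w, MetricBtw y w z → ¬MetricBtw y' w z') :
    hB.1.angle E y' y z + hB.1.angle E z y' z' = hB.1.angle E y y' z' + hB.1.angle E z' y z := by
  have hcont : Continuous fun r : ℝ × ℝ => E (hB.1.lineMap y' z' r.2) - E (hB.1.lineMap y z r.1) :=
    (hE.comp ((hB.continuous_lineMap y' z').comp continuous_snd)).sub
      (hE.comp ((hB.continuous_lineMap y z).comp continuous_fst))
  -- Both sides are variations of `log (E q - E r)` as `q` and `r` travel along the two segments,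
  -- one after the other in either order.
  have hsquare := logVariation_unitSquare
    (F := fun s t => E (hB.1.lineMap y' z' t) - E (hB.1.lineMap y z s)) hcont fun s t h0 =>
      hdisj _ (hB.1.metricBtw_lineMap y z s)
        (hinj (sub_eq_zero.1 h0) ▸ hB.1.metricBtw_lineMap y' z' t)
  simp only [IsGeodesicMetricSpace.lineMap_zero, IsGeodesicMetricSpace.lineMap_one] at hsquare
  rwa [hB.logVariation_sub_lineMap hE hinj fun h => hdisj y' h (metricBtw_self_left y' z'),
    hB.logVariation_sub_lineMap hE hinj fun h => hdisj z' h (metricBtw_self_right y' z')] at hsquare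

end Angle

section Orientation

variable {a b c c' m s x : S}

theorem orientation_swap (a b c : S) : hB.1.orientation E b a c = -hB.1.orientation E a b c := by
  unfold IsGeodesicMetricSpace.orientation
  rw [hB.angle_swap hE hinj b c a, hB.angle_swap hE hinj a b c, hB.angle_swap hE hinj c a b]
  ring

theorem orientation_ne_zero (h : ¬MetricCollinear a b c) : hB.1.orientation E a b c ≠ 0 := by
  have ha : ¬MetricBtw b a c := fun ha => h (.inr (.inr ha.symm))
  have hb : ¬MetricBtw c b a := fun hb => h (.inl hb.symm)
  have hc : ¬MetricBtw a c b := fun hc => h (.inr (.inl hc.symm))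
  have hab : E a - E b ≠ 0 :=
    sub_ne_zero.2 (hinj.ne (by rintro rfl; exact ha (metricBtw_self_left _ _)))
  have hbc : E b - E c ≠ 0 :=
    sub_ne_zero.2 (hinj.ne (by rintro rfl; exact hb (metricBtw_self_left _ _)))
  have hca : E c - E a ≠ 0 :=
    sub_ne_zero.2 (hinj.ne (by rintro rfl; exact hc (metricBtw_self_left _ _)))
  have hexp : Complex.exp (hB.1.orientation E a b c) = -1 := by
    rw [IsGeodesicMetricSpace.orientation, Complex.exp_add, Complex.exp_add,
      hB.exp_angle hE hinj ha, hB.exp_angle hE hinj hb, hB.exp_angle hE hinj hc,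
      ← neg_sub (E a) (E b), ← neg_sub (E b) (E c), ← neg_sub (E c) (E a)]
    field_simp
  intro h0
  rw [h0, Complex.exp_zero] at hexp
  norm_num at hexp

theorem orientation_eq_of_winding_eq_zero (hdisj : ∀ w, MetricBtw c w c' → ¬MetricBtw a w b)
    (ha : hB.1.winding E a b c c' = 0) (hb : hB.1.winding E b a c c' = 0) :
    hB.1.orientation E a b c = hB.1.orientation E a b c' := by
  have hsquare := hB.angle_add_angle_of_disjoint hE hinj hdisj
  unfold IsGeodesicMetricSpace.winding IsGeodesicMetricSpace.orientation at *
  linear_combination ha - hb - hsquare - hB.angle_swap hE hinj a b c' +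
    hB.angle_swap hE hinj b c a

theorem orientation_eq_of_forall_not_collinear
    (h : ∀ w, MetricBtw c w c' → ¬MetricCollinear a b w) :
    hB.1.orientation E a b c = hB.1.orientation E a b c' :=
  hB.orientation_eq_of_winding_eq_zero hE hinj
    (fun w hw haw => h w hw (.inr (.inl haw.symm)))
    (hB.winding_eq_zero hE hinj fun w hw hba => h w hw (.inr (.inr hba.symm)))
    (hB.winding_eq_zero hE hinj fun w hw hab => h w hw (.inl hab))

omit hE hinj in
include hB in
theorem not_collinear_of_metricBtw (hx : MetricBtw a x m) (has : ¬MetricBtw a x s)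
    (hms : ¬MetricBtw m x s) {w : S} (hw : MetricBtw x w m) : ¬MetricCollinear s a w := by
  have haxw : MetricBtw a x w := hx.trans_right_left hw
  have hax : a ≠ x := by
    rintro rfl
    exact has (metricBtw_self_left _ _)
  rintro (hsaw | haws | hwsa)
  · have hsam : MetricBtw s a m :=
      hB.metricBtw_expand_left (hsaw.trans_right_left haxw) hx hax
    exact hms (hsam.trans_right hx).symm
  · exact has (haws.trans_left haxw)
  · rcases hB.metricBtw_total hwsa.symm haxw with hasx | haxs
    · exact hms (hx.trans_left_right hasx).symm
    · exact has haxs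

theorem orientation_eq_of_metricBtw (hx : MetricBtw a x m) (has : ¬MetricBtw a x s)
    (hms : ¬MetricBtw m x s) : hB.1.orientation E s a x = hB.1.orientation E s a m :=
  hB.orientation_eq_of_forall_not_collinear hE hinj fun _ hw =>
    hB.not_collinear_of_metricBtw hx has hms hw

theorem orientation_eq_orientation_of_metricBtw (hx : MetricBtw a x m) (has : ¬MetricBtw a x s)
    (hms : ¬MetricBtw m x s) : hB.1.orientation E s a x = hB.1.orientation E s x m := by
  have rotate := hB.1.orientation_rotate E
  calc hB.1.orientation E s a x
      = hB.1.orientation E s a m := hB.orientation_eq_of_metricBtw hE hinj hx has hms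
    _ = -hB.1.orientation E s m a := by rw [← rotate s a m, hB.orientation_swap hE hinj, rotate]
    _ = -hB.1.orientation E s m x := by
      rw [hB.orientation_eq_of_metricBtw hE hinj hx.symm hms has]
    _ = hB.1.orientation E s x m := by
      rw [← rotate s x m, hB.orientation_swap hE hinj, rotate, neg_neg]

end Orientation

/-! ### Pasch's axiom -/

section Pasch

variable {a b m₁ m₂ p s u v w x : S}

include hB

theorem metricBtw_of_metricBtw_endpoints (h₁ : MetricBtw a x m₁) (h₂ : MetricBtw a x m₂)
    (hs : MetricBtw m₁ s m₂) : MetricBtw a x s := by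
  -- If `[a, s]` missed `x`, then `s` would lie on opposite sides of the geodesics from `a`
  -- through `x` to `m₁` and `m₂`, yet on the same side of their common part `[a, x]`.
  by_contra hx
  have hx₁ : ¬MetricBtw m₁ x s := fun h => hx (h₂.trans_right_left (hs.trans_left_right h))
  have hx₂ : ¬MetricBtw m₂ x s := fun h => hx (h₁.trans_right_left (hs.symm.trans_left_right h))
  have hs₁ : ¬MetricBtw m₁ s x := fun h => hx (h₁.trans_right_left h.symm)
  have hs₂ : ¬MetricBtw m₂ s x := fun h => hx (h₂.trans_right_left h.symm)
  have side₁ : hB.1.orientation E s a x = hB.1.orientation E s x m₁ :=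
    hB.orientation_eq_orientation_of_metricBtw hE hinj h₁ hx hx₁
  have side₂ : hB.1.orientation E s a x = hB.1.orientation E s x m₂ :=
    hB.orientation_eq_orientation_of_metricBtw hE hinj h₂ hx hx₂
  have opposite : hB.1.orientation E x m₁ s = hB.1.orientation E x s m₂ :=
    hB.orientation_eq_orientation_of_metricBtw hE hinj hs hs₁ hs₂
  refine hB.orientation_ne_zero hE hinj
    (hB.not_collinear_of_metricBtw h₁ hx hx₁ (metricBtw_self_left x m₁)) ?_
  linear_combination (side₁ + side₂ + opposite + hB.orientation_swap hE hinj s x m₂ -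
    hB.1.orientation_rotate E s x m₁) / 2

omit hE hinj in
theorem not_metricBtw_of_disjoint (hv : MetricBtw p v b) (hx : MetricBtw a x b)
    (hdisj : ∀ w, MetricBtw p w x → ¬MetricBtw a w v) {w : S} (hw : MetricBtw x w a) :
    ¬MetricBtw v p w := by
  intro hp
  have hvp : p ≠ v := by
    rintro rfl
    exact hdisj p (metricBtw_self_left _ _) (metricBtw_self_right _ _)
  have hwpb : MetricBtw w p b := hB.metricBtw_expand_left hp.symm hv hvp
  have hapb : MetricBtw a p b := (hx.trans_left hw.symm).trans_right hwpb
  exact hdisj p (metricBtw_self_left _ _) (hapb.trans_right_left hv)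

theorem inner_pasch (hv : MetricBtw p v b) (hx : MetricBtw a x b) :
    ∃ w, MetricBtw p w x ∧ MetricBtw a w v := by
  -- If the diagonals `[p, x]` and `[a, v]` of the quadrilateral `a p v x` were disjoint, then `a`
  -- and `v` would lie on the same side of `[p, x]`; but they lie on opposite sides, as `[p, x]`
  -- separates the sides `[b, a]` and `[b, p]` of the triangle `a b p`.
  by_contra! hdisj
  have hxv : ¬MetricBtw a x v := hdisj x (metricBtw_self_right _ _)
  have hvx : ¬MetricBtw p v x := fun h => hdisj v h (metricBtw_self_right _ _)
  have hbv : ¬MetricBtw b v x := fun h => hxv (hx.trans_right_left h.symm)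
  have hxcone : ∀ w, MetricBtw v w p → ¬MetricBtw a x w := fun w hw h =>
    hxv (hB.metricBtw_of_metricBtw_endpoints hE hinj h hx (hv.trans_left_right hw.symm))
  have hxa : ¬MetricBtw a x p := hxcone p (metricBtw_self_right _ _)
  have hbx : ¬MetricBtw b x p := by
    intro h
    rcases hB.metricBtw_total h.symm hv with hpxv | hpvx
    · exact hbv (hv.trans_left_right hpxv).symm
    · exact hvx hpvx
  have windingp : hB.1.winding E p x a v = 0 := by
    rw [← hB.1.winding_rotate, ← hB.1.winding_rotate]
    exact hB.winding_eq_zero hE hinj fun w hw => hB.not_metricBtw_of_disjoint hv hx hdisj hw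
  have windingx : hB.1.winding E x p a v = 0 := by
    rw [← hB.1.winding_rotate]
    exact hB.winding_eq_zero hE hinj hxcone
  have same_side : hB.1.orientation E p x a = hB.1.orientation E p x v :=
    hB.orientation_eq_of_winding_eq_zero hE hinj (fun w hw hw' => hdisj w hw' hw)
      windingp windingx
  have side_a : hB.1.orientation E p a x = hB.1.orientation E p x b :=
    hB.orientation_eq_orientation_of_metricBtw hE hinj hx hxa hbx
  have side_v : hB.1.orientation E x p v = hB.1.orientation E x p b :=
    hB.orientation_eq_of_metricBtw hE hinj hv hvx hbv
  refine hB.orientation_ne_zero hE hinj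
    (hB.not_collinear_of_metricBtw hv hvx hbv (metricBtw_self_left v b)) ?_
  have swap := hB.orientation_swap hE hinj
  have rotate := hB.1.orientation_rotate E
  linear_combination (side_v + swap p x b + side_a - swap a p x - rotate a p x + same_side +
    swap p x v) / 2

theorem exists_metricBtw_cevian_and_chord (hu : MetricBtw p u a) (hv : MetricBtw p v b)
    (hx : MetricBtw a x b) : ∃ w, MetricBtw p w x ∧ MetricBtw u w v := by
  obtain ⟨y, hpyx, hayv⟩ := hB.inner_pasch hE hinj hv hx
  obtain ⟨w, hpwy, hvwu⟩ := hB.inner_pasch hE hinj hu hayv.symm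
  exact ⟨w, hpyx.trans_left hpwy, hvwu.symm⟩

theorem exists_metricBtw_of_metricBtw_chord (hu : MetricBtw p u a) (hv : MetricBtw p v b)
    (hw : MetricBtw u w v) : ∃ x, MetricBtw a x b ∧ MetricBtw p w x := by
  have hclosed (c d : S) : IsClosed {x | ∃ y ∈ {y | MetricBtw c y d}, MetricBtw p y x} :=
    isClosed_setOf_exists_mem_metricBtw (hB.isCompact_setOf_metricBtw c d) p
  obtain ⟨x, hx, ⟨y₁, huyw, hpy₁⟩, y₂, hwyv, hpy₂⟩ :=
    isPreconnected_closed_iff.1 (hB.isPreconnected_setOf_metricBtw a b) _ _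
      (hclosed u w) (hclosed w v)
      (fun x hx => by
        obtain ⟨y, hpyx, huyv⟩ := hB.exists_metricBtw_cevian_and_chord hE hinj hu hv hx
        rcases hB.metricBtw_total hw huyv with huwy | huyw
        · exact .inr ⟨y, huyv.trans_left_right huwy, hpyx⟩
        · exact .inl ⟨y, huyw, hpyx⟩)
      ⟨a, metricBtw_self_left a b, u, metricBtw_self_left u w, hu⟩
      ⟨b, metricBtw_self_right a b, v, metricBtw_self_right w v, hv⟩
  have hywy : MetricBtw y₁ w y₂ := (hw.trans_left_right huyw).trans_right_left hwyv
  refine ⟨x, hx, ?_⟩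
  rcases hB.metricBtw_total hpy₁ hpy₂ with h | h
  · exact hpy₂.trans_left (h.trans_right hywy)
  · exact hpy₁.trans_left (h.trans_right hywy.symm)

end Pasch

end IsBusemannSpace

/-! ### Join-hull commutativity -/

theorem segConvexHull_singleton_union_eq_join {S : Type*} {seg : S → S → Set S} {A : Set S} {p : S}
    (hsub : {p} ∪ A ⊆ ⋃ x ∈ A, seg p x) (hconv : SegConvex seg (⋃ x ∈ A, seg p x)) :
    segConvexHull seg ({p} ∪ A) = ⋃ x ∈ A, seg p x := by
  refine Subset.antisymm (sInter_subset_of_mem ⟨hconv, hsub⟩) (subset_sInter fun R hR => ?_)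
  exact iUnion₂_subset fun x hx => hR.1 p (hR.2 (.inl rfl)) x (hR.2 (.inr hx))

theorem busemann_surface_join_hull_commutative_general {S : Type*} [MetricSpace S]
    (hB : IsBusemannSpace S) {E : S → ℂ} (hE : Continuous E) (hinj : Function.Injective E)
    {seg : S → S → Set S} (hseg : ∀ x y : S, IsGeodesicSegment x y (seg x y))
    {A : Set S} (hAne : A.Nonempty) (hAconv : SegConvex seg A) (p : S) :
    segConvexHull seg ({p} ∪ A) = ⋃ x ∈ A, seg p x := by
  have mem_seg {x y w : S} : w ∈ seg x y ↔ MetricBtw x w y :=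
    hB.mem_iff_metricBtw_of_isGeodesicSegment (hseg x y)
  apply segConvexHull_singleton_union_eq_join
  · rintro y (rfl | hy)
    · obtain ⟨a, ha⟩ := hAne
      exact mem_biUnion ha (mem_seg.2 (metricBtw_self_left y a))
    · exact mem_biUnion hy (mem_seg.2 (metricBtw_self_right p y))
  · intro u hu v hv w hw
    simp only [mem_iUnion, exists_prop, mem_seg] at hu hv hw ⊢
    obtain ⟨a, ha, hpua⟩ := hu
    obtain ⟨b, hb, hpvb⟩ := hv
    obtain ⟨x, haxb, hpwx⟩ := hB.exists_metricBtw_of_metricBtw_chord hE hinj hpua hpvb hw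
    exact ⟨x, hAconv a ha b hb (mem_seg.2 haxb), hpwx⟩

/-- Busemann surfaces are join-hull commutative. -/
theorem busemann_surface_join_hull_commutative {S : Type*} [MetricSpace S]
    (hS : IsBusemannSurface S)
    (seg : S → S → Set S) (hseg : ∀ x y : S, IsGeodesicSegment x y (seg x y))
    (A : Set S) (hAne : A.Nonempty) (hAconv : SegConvex seg A)
    (p : S) (hp : p ∉ A) :
    segConvexHull seg ({p} ∪ A) = ⋃ x ∈ A, seg p x := by
  let e := hS.2.some.trans Complex.equivRealProdCLM.symm.toHomeomorph
  exact busemann_surface_join_hull_commutative_general hS.1 e.continuous e.injective hseg hAne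
    hAconv p
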